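/- (Theorem 3.1, unbiasedness in the limit) Let (S_α)_{α ∈ ℕ^d} be integrable real random variables on a probability space (Ω, F, P), let S be an integrable real random variable such that |E[S_α] − E[S]| → 0 as min_{1 ≤ i ≤ d} α_i → ∞, and let N be an ℕ^d-valued random variable independent of the family (S_α) with P(N ≥ α) > 0 for all α ∈ ℕ^d. Then the expectations of the partial estimators Z̄_n = Σ_{α ∈ I_0^n} ΔS_α · 1_{{N ≥ α}} / P(N ≥ α) converge: lim_{n→∞} E[Z̄_n] = E[S]. -/

import Mathlib

open MeasureTheory ProbabilityTheory Filter

/-- The `i`-th difference operator: `(Δ_i S)_α = S_α − S_{α−e_i}` if `α_i > 0`,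
and `(Δ_i S)_α = S_α` if `α_i = 0`. -/
def diffOp {d : ℕ} {V : Type*} [AddCommGroup V] [Module ℝ V]
    (i : Fin d) (S : (Fin d → ℕ) → V) : (Fin d → ℕ) → V :=
  fun α => if α i = 0 then S α else S α - S (Function.update α i (α i - 1))

/-- The mixed difference operator `Δ = Δ_1 ∘ ⋯ ∘ Δ_d`. -/
def mixedDiff {d : ℕ} {V : Type*} [AddCommGroup V] [Module ℝ V]
    (S : (Fin d → ℕ) → V) : (Fin d → ℕ) → V :=
  (List.finRange d).foldr (fun i T => diffOp i T) S

theorem tele_aux {d : ℕ} (i : Fin d) (T : (Fin d → ℕ) → ℝ) (α : Fin d → ℕ) (n : ℕ) :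
    ∑ k ∈ Finset.range (n + 1), diffOp i T (Function.update α i k) = T (Function.update α i n) := by
  induction n with
  | zero => simp [diffOp]
  | succ n ih =>
    rw [Finset.sum_range_succ, ih]
    simp [diffOp]

theorem box_aux {d : ℕ} (n : ℕ) (F : (Fin d → ℕ) → ℝ) (i : Fin d) (A : Finset (Fin d))
    (hi : i ∉ A) :
    ∑ α ∈ Fintype.piFinset (fun j => if j ∈ insert i A then Finset.range (n + 1) else {n}), F α
    = ∑ α ∈ Fintype.piFinset (fun j => if j ∈ A then Finset.range (n + 1) else {n}),
        ∑ k ∈ Finset.range (n + 1), F (Function.update α i k) := by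
  rw [← Finset.sum_product']
  refine Finset.sum_bij' (fun α _ => (Function.update α i n, α i))
    (fun p _ => Function.update p.1 i p.2) ?_ ?_ ?_ ?_ ?_
  · intro α h
    rw [Fintype.mem_piFinset] at h
    rw [Finset.mem_product, Fintype.mem_piFinset]
    refine ⟨fun j => ?_, ?_⟩
    · by_cases hj : j = i
      · subst hj; simp [hi]
      · have := h j
        simpa [hj] using this
    · simpa using h i
  · rintro ⟨α, k⟩ h
    rw [Finset.mem_product, Fintype.mem_piFinset] at h
    rw [Fintype.mem_piFinset]
    intro j
    by_cases hj : j = i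
    · subst hj; simpa using h.2
    · have := h.1 j
      simpa [hj] using this
  · intro α h
    simp
  · rintro ⟨α, k⟩ h
    rw [Finset.mem_product, Fintype.mem_piFinset] at h
    have := h.1 i
    simp [hi] at this
    simp [← this]
  · intro α h
    simp

theorem sum_aux {d : ℕ} (n : ℕ) (s : (Fin d → ℕ) → ℝ) (l : List (Fin d)) (hl : l.Nodup) :
    ∑ α ∈ Fintype.piFinset (fun j => if j ∈ l.toFinset then Finset.range (n + 1) else {n}),
      l.foldr (fun i T => diffOp i T) s α = s (fun _ => n) := by
  induction l with
  | nil =>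
    have : (Fintype.piFinset fun _ : Fin d => ({n} : Finset ℕ)) = {fun _ => n} := by
      ext a; simp [funext_iff]
    simp [this]
  | cons i l ih =>
    rw [List.nodup_cons] at hl
    rw [List.toFinset_cons, box_aux n _ i _ (by simpa using hl.1), ← ih hl.2]
    refine Finset.sum_congr rfl fun α h => ?_
    rw [List.foldr_cons, tele_aux]
    have := (Fintype.mem_piFinset.1 h) i
    simp [hl.1] at this
    congr 1
    simp [← this]

theorem mixed_sum {d : ℕ} (n : ℕ) (s : (Fin d → ℕ) → ℝ) :
    ∑ α ∈ Finset.Iic ((fun _ => n) : Fin d → ℕ), mixedDiff s α = s (fun _ => n) := by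
  rw [← sum_aux n s (List.finRange d) (List.nodup_finRange d)]
  refine Finset.sum_congr ?_ fun _ _ => rfl
  ext a
  simp [Pi.le_def, Nat.lt_succ_iff]

theorem meas_aux {d : ℕ} (l : List (Fin d)) : ∀ α : Fin d → ℕ,
    Measurable (fun s : (Fin d → ℕ) → ℝ => l.foldr (fun i T => diffOp i T) s α) := by
  induction l with
  | nil => intro α; exact measurable_pi_apply α
  | cons i l ih =>
    intro α
    simp only [List.foldr_cons, diffOp]
    split_ifs
    · exact ih _
    · exact (ih _).sub (ih _)

theorem int_aux {d : ℕ} {Ω : Type*} [MeasurableSpace Ω] (μ : Measure Ω)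
    (S : (Fin d → ℕ) → Ω → ℝ) (hS : ∀ α, Integrable (S α) μ) (l : List (Fin d)) :
    ∀ α : Fin d → ℕ,
    Integrable (fun ω => l.foldr (fun i T => diffOp i T) (fun β => S β ω) α) μ ∧
    ∫ ω, l.foldr (fun i T => diffOp i T) (fun β => S β ω) α ∂μ =
      l.foldr (fun i T => diffOp i T) (fun β => ∫ ω, S β ω ∂μ) α := by
  induction l with
  | nil => intro α; exact ⟨hS α, rfl⟩
  | cons i l ih =>
    intro α
    simp only [List.foldr_cons, diffOp]
    split_ifs
    · exact ih _
    · refine ⟨(ih _).1.sub (ih _).1, ?_⟩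
      rw [integral_sub (ih _).1 (ih _).1, (ih _).2, (ih _).2]

/-- Theorem 3.1, unbiasedness in the limit: if `|E[S_α] − E[S]| → 0`
as `min_i α_i → ∞` and `N` is independent of the family `(S_α)` with `P(N ≥ α) > 0`
for all `α`, then `E[Z̄_n] → E[S]` as `n → ∞`, where
`Z̄_n = Σ_{α ∈ I_0^n} ΔS_α · 1_{N ≥ α} / P(N ≥ α)`. -/
theorem estimator_unbiased_limit {d : ℕ} (hd : 1 ≤ d)
    {Ω : Type*} [MeasureSpace Ω] [IsProbabilityMeasure (ℙ : Measure Ω)]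
    (S : (Fin d → ℕ) → Ω → ℝ) (hS : ∀ α, Integrable (S α) ℙ)
    (Slim : Ω → ℝ) (hSlim : Integrable Slim ℙ)
    (hconv : ∀ ε > (0 : ℝ), ∃ M : ℕ, ∀ α : Fin d → ℕ, (∀ i, M ≤ α i) →
      |(∫ ω, S α ω ∂ℙ) - ∫ ω, Slim ω ∂ℙ| ≤ ε)
    (N : Ω → (Fin d → ℕ)) (hN : Measurable N)
    (hind : IndepFun N (fun ω => fun α => S α ω) ℙ)
    (hpos : ∀ α : Fin d → ℕ, 0 < ℙ {ω | α ≤ N ω}) :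
    Tendsto (fun n : ℕ =>
        ∫ ω, (∑ α ∈ Finset.Iic ((fun _ => n) : Fin d → ℕ),
          mixedDiff (fun β => S β ω) α * Set.indicator {ω' | α ≤ N ω'} 1 ω
            / (ℙ {ω' | α ≤ N ω'}).toReal) ∂ℙ)
      atTop (nhds (∫ ω, Slim ω ∂ℙ)) := by
  have key : ∀ n : ℕ, ∫ ω, (∑ α ∈ Finset.Iic ((fun _ => n) : Fin d → ℕ),
          mixedDiff (fun β => S β ω) α * Set.indicator {ω' | α ≤ N ω'} 1 ω
            / (ℙ {ω' | α ≤ N ω'}).toReal) ∂ℙ = ∫ ω, S (fun _ => n) ω ∂ℙ := by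
    intro n
    have hms : ∀ α : Fin d → ℕ, MeasurableSet {ω' | α ≤ N ω'} := fun α =>
      hN (Set.to_countable (Set.Ici α)).measurableSet
    have hD := int_aux ℙ S hS (List.finRange d)
    have hint : ∀ α : Fin d → ℕ, Integrable (fun ω =>
        mixedDiff (fun β => S β ω) α * Set.indicator {ω' | α ≤ N ω'} (1 : Ω → ℝ) ω) ℙ := by
      intro α
      have := (hD α).1.indicator (hms α)
      refine this.congr (Eventually.of_forall fun ω => ?_)
      by_cases h : α ≤ N ω <;> simp [Set.indicator, h, mixedDiff]
    rw [integral_finset_sum _ fun α _ => (hint α).div_const _]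
    rw [← mixed_sum n (fun β => ∫ ω, S β ω ∂ℙ)]
    refine Finset.sum_congr rfl fun α _ => ?_
    rw [integral_div]
    have hp : (ℙ {ω' | α ≤ N ω'}).toReal ≠ 0 :=
      (ENNReal.toReal_pos (hpos α).ne' (measure_ne_top _ _)).ne'
    rw [div_eq_iff hp]
    have hI : IndepFun (fun ω => mixedDiff (fun β => S β ω) α)
        (Set.indicator {ω' | α ≤ N ω'} (1 : Ω → ℝ)) ℙ :=
      (hind.symm.comp (meas_aux (List.finRange d) α)
        (measurable_of_countable (Set.indicator (Set.Ici α) (1 : (Fin d → ℕ) → ℝ))))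
    have h1 := hI.integral_fun_mul_eq_mul_integral (hD α).1.aestronglyMeasurable
      ((measurable_one.indicator (hms α)).aestronglyMeasurable)
    rw [h1, integral_indicator_one (hms α)]
    congr 1
    exact (hD α).2
  simp_rw [key]
  rw [Metric.tendsto_atTop]
  intro ε hε
  obtain ⟨M, hM⟩ := hconv (ε / 2) (by positivity)
  refine ⟨M, fun n hn => ?_⟩
  rw [Real.dist_eq]
  exact (hM (fun _ => n) (fun _ => hn)).trans_lt (by linarith)
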